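/- Let F be a finite field of characteristic 2 with q = 2^n elements, and let G = C_2^5 be the elementary abelian group of order 32. Then the unit group of the group algebra FG is isomorphic to C_2^{31n} × C_{2^n - 1}. -/

import Mathlib

/-- The cyclic group of order `m`, realized as `Multiplicative (ZMod m)`. -/
abbrev C (m : ℕ) : Type := Multiplicative (ZMod m)

/-!
Let `G` be a finite abelian group of exponent dividing `p = char F`, with augmentation
`ε : FG → F`. Both `x ↦ x ^ p` and `x ↦ (ε x) ^ p` are ring endomorphisms of `FG`, and they agree
on scalars and on `G`, so they are equal. Hence `x` is a unit as soon as `ε x ≠ 0`, and the units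
of augmentation `1`, which are the elements `1 + y` with `ε y = 0`, form an elementary abelian
`p`-group of order `q ^ (|G| - 1)`. The scalars `Fˣ` split `U(FG) → Fˣ`, so `U(FG)` is the product
of this group with the cyclic group `Fˣ`.
-/

open Bialgebra Module

theorem nonempty_mulEquiv_ker_prod {G H : Type*} [CommGroup G] [Group H] {f : G →* H} {g : H →* G}
    (hfg : Function.LeftInverse f g) : Nonempty (G ≃* f.ker × H) := by
  have hcomm (v : f.ker) (h : H) : Commute (f.ker.subtype v) (g h) := Commute.all _ _
  have hf (v : f.ker) (h : H) : f (v * g h) = h := by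
    rw [map_mul, f.mem_ker.mp v.2, hfg, one_mul]
  refine ⟨(MulEquiv.ofBijective (f.ker.subtype.noncommCoprod g hcomm) ⟨?_, fun u ↦ ?_⟩).symm⟩
  · rintro ⟨v, h⟩ ⟨v', h'⟩ (huv : (v : G) * g h = v' * g h')
    obtain rfl : h = h' := by rw [← hf v h, huv, hf]
    exact Prod.ext (Subtype.ext (mul_right_cancel huv)) rfl
  · have hu : u * (g (f u))⁻¹ ∈ f.ker := by
      rw [f.mem_ker, map_mul, map_inv, hfg, mul_inv_cancel]
    exact ⟨(⟨_, hu⟩, f u), inv_mul_cancel_right u _⟩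

theorem nonempty_linearEquiv_fin_arrow_of_natCard_eq {K V : Type*} [Field K] [Finite K]
    [AddCommGroup V] [Module K V] [Finite V] {m : ℕ} (hcard : Nat.card V = Nat.card K ^ m) :
    Nonempty (V ≃ₗ[K] (Fin m → K)) := by
  have : Module.Finite K V := .of_finite
  rw [natCard_eq_pow_finrank (K := K)] at hcard
  have hrank : finrank K V = m := Nat.pow_right_injective Finite.one_lt_card hcard
  exact ⟨(finBasisOfFinrankEq K V hrank).equivFun⟩

theorem nonempty_mulEquiv_fin_arrow_of_pow_eq_one {p : ℕ} [Fact p.Prime] {V : Type*} [CommGroup V]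
    [Finite V] (hV : ∀ v : V, v ^ p = 1) {m : ℕ} (hcard : Nat.card V = p ^ m) :
    Nonempty (V ≃* (Fin m → C p)) := by
  let : Module (ZMod p) (Additive V) := AddCommGroup.zmodModule fun v ↦ hV v.toMul
  have hcard' : Nat.card (Additive V) = Nat.card (ZMod p) ^ m := by rwa [Nat.card_zmod]
  obtain ⟨e⟩ := nonempty_linearEquiv_fin_arrow_of_natCard_eq hcard'
  exact ⟨e.toAddEquiv.toMultiplicativeRight.trans (MulEquiv.piMultiplicative _)⟩

theorem nonempty_units_mulEquiv_cyclic (F : Type*) [Field F] [Finite F] :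
    Nonempty (Fˣ ≃* C (Nat.card F - 1)) :=
  ⟨mulEquivOfCyclicCardEq ((Nat.card_units F).trans (Nat.card_zmod _).symm)⟩

theorem natCard_ker_unitsMap {R S : Type*} [Ring R] [Ring S] (f : R →+* S) [IsLocalHom f] :
    Nat.card (Units.map (f : R →* S)).ker = Nat.card (RingHom.ker f) := by
  have hsub (u : (Units.map (f : R →* S)).ker) : ((u : Rˣ) : R) - 1 ∈ RingHom.ker f := by
    rw [RingHom.mem_ker, map_sub, map_one, sub_eq_zero]
    exact congrArg Units.val (MonoidHom.mem_ker.mp u.2)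
  refine Nat.card_eq_of_bijective (fun u ↦ ⟨(u : Rˣ) - 1, hsub u⟩) ⟨fun u v huv ↦ ?_, fun y ↦ ?_⟩
  · exact Subtype.ext (Units.ext (sub_left_injective (congrArg Subtype.val huv)))
  · have hy : f (1 + y) = 1 := by rw [map_add, map_one, RingHom.mem_ker.mp y.2, add_zero]
    obtain ⟨u, hu⟩ : IsUnit (1 + y : R) := isUnit_of_map_unit f _ (hy ▸ isUnit_one)
    have hu_mem : u ∈ (Units.map (f : R →* S)).ker :=
      MonoidHom.mem_ker.mpr (Units.ext ((congrArg f hu).trans hy))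
    exact ⟨⟨u, hu_mem⟩, Subtype.ext (by simp only [hu, add_sub_cancel_left])⟩

theorem natCard_ker_algHom {F A : Type*} [Field F] [Ring A] [Algebra F A] [FiniteDimensional F A]
    (ε : A →ₐ[F] F) :
    Nat.card (RingHom.ker (ε : A →+* F)) = Nat.card F ^ (finrank F A - 1) := by
  have hε : ε.toLinearMap ≠ 0 := fun h ↦
    one_ne_zero ((map_one ε).symm.trans (LinearMap.congr_fun h 1))
  rw [← Dual.finrank_ker_add_one_of_ne_zero hε, Nat.add_sub_cancel]
  exact natCard_eq_pow_finrank (V := LinearMap.ker ε.toLinearMap)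

/-- The augmentation `∑ a_g g ↦ ∑ a_g` of a monoid algebra, which is the counit of its bialgebra
structure. -/
noncomputable abbrev augmentation (R G : Type*) [CommSemiring R] [Monoid G] :
    MonoidAlgebra R G →ₐ[R] R :=
  counitAlgHom R (MonoidAlgebra R G)

/-- The group of normalized units of a monoid algebra, usually denoted `V(RG)`: the units of
augmentation `1`. -/
noncomputable abbrev normalizedUnits (R G : Type*) [CommSemiring R] [Monoid G] :
    Subgroup (MonoidAlgebra R G)ˣ :=
  (Units.map (augmentation R G : MonoidAlgebra R G →* R)).ker

section ExponentChar

variable {R G : Type*} [CommSemiring R] [CommMonoid G] {p : ℕ} [ExpChar R p]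

theorem pow_eq_algebraMap_augmentation_pow (hG : ∀ g : G, g ^ p = 1) (x : MonoidAlgebra R G) :
    x ^ p = algebraMap R _ (augmentation R G x ^ p) := by
  have hinj : Function.Injective (algebraMap R (MonoidAlgebra R G)) :=
    Function.LeftInverse.injective (augmentation R G).commutes
  have : ExpChar (MonoidAlgebra R G) p := expChar_of_injective_algebraMap hinj p
  have h : frobenius (MonoidAlgebra R G) p = (algebraMap R _).comp
      ((frobenius R p).comp (augmentation R G : MonoidAlgebra R G →+* R)) := by
    ext <;> simp [frobenius_def, MonoidAlgebra.single_pow, hG]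
  exact RingHom.congr_fun h x

theorem isLocalHom_augmentation (hG : ∀ g : G, g ^ p = 1) :
    IsLocalHom (augmentation R G : MonoidAlgebra R G →+* R) where
  map_nonunit x hx := by
    rw [← isUnit_pow_iff (expChar_ne_zero R p), pow_eq_algebraMap_augmentation_pow hG x]
    exact (hx.pow p).map _

theorem normalizedUnits_pow_eq_one (hG : ∀ g : G, g ^ p = 1) (u : normalizedUnits R G) :
    u ^ p = 1 := by
  have hu : augmentation R G (u : (MonoidAlgebra R G)ˣ) = 1 :=
    congrArg Units.val (MonoidHom.mem_ker.mp u.2)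
  refine Subtype.ext (Units.ext ?_)
  calc ((u : (MonoidAlgebra R G)ˣ) : MonoidAlgebra R G) ^ p
      = algebraMap R _ (augmentation R G (u : (MonoidAlgebra R G)ˣ) ^ p) :=
        pow_eq_algebraMap_augmentation_pow hG _
    _ = 1 := by rw [hu, one_pow, map_one]

theorem natCard_normalizedUnits {F : Type*} [Field F] [ExpChar F p] [Finite G]
    (hG : ∀ g : G, g ^ p = 1) :
    Nat.card (normalizedUnits F G) = Nat.card F ^ (Nat.card G - 1) := by
  let b : Basis G F (MonoidAlgebra F G) := .ofRepr (MonoidAlgebra.coeffLinearEquiv F)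
  have : FiniteDimensional F (MonoidAlgebra F G) := .of_basis b
  have := isLocalHom_augmentation (R := F) hG
  rw [← finrank_eq_nat_card_basis b, ← natCard_ker_algHom (augmentation F G)]
  exact natCard_ker_unitsMap (augmentation F G : MonoidAlgebra F G →+* F)

end ExponentChar

theorem nonempty_units_mulEquiv_normalizedUnits_prod (R G : Type*) [CommSemiring R]
    [CommMonoid G] : Nonempty ((MonoidAlgebra R G)ˣ ≃* normalizedUnits R G × Rˣ) :=
  nonempty_mulEquiv_ker_prod
    (g := Units.map (algebraMap R (MonoidAlgebra R G) : R →* MonoidAlgebra R G))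
    fun r ↦ Units.ext ((augmentation R G).commutes r)

theorem unit_group_stmt_12_general {F G : Type*} [Field F] [Finite F] [CommGroup G] [Finite G]
    {p : ℕ} [CharP F p] (hG : ∀ g : G, g ^ p = 1) {n : ℕ} (hF : Nat.card F = p ^ n) :
    Nonempty ((MonoidAlgebra F G)ˣ ≃*
      ((Fin ((Nat.card G - 1) * n) → C p) × C (p ^ n - 1))) := by
  have : Fact p.Prime := ⟨CharP.char_is_prime F p⟩
  have : ExpChar F p := expChar_prime F p
  have hcard : Nat.card (normalizedUnits F G) = p ^ ((Nat.card G - 1) * n) := by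
    rw [natCard_normalizedUnits hG, hF, ← pow_mul, mul_comm]
  have : Finite (normalizedUnits F G) :=
    Nat.finite_of_card_ne_zero (hcard ▸ NeZero.ne _)
  obtain ⟨split⟩ := nonempty_units_mulEquiv_normalizedUnits_prod F G
  obtain ⟨e₁⟩ := nonempty_mulEquiv_fin_arrow_of_pow_eq_one (normalizedUnits_pow_eq_one hG) hcard
  obtain ⟨e₂⟩ := nonempty_units_mulEquiv_cyclic F
  exact ⟨split.trans (e₁.prodCongr (hF ▸ e₂))⟩

theorem unit_group_stmt_12 (F : Type*) [Field F] [Fintype F] [CharP F 2]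
    (n : ℕ) (hn : 0 < n) (hF : Fintype.card F = 2 ^ n) :
    Nonempty ((MonoidAlgebra F (C 2 × C 2 × C 2 × C 2 × C 2))ˣ ≃*
      ((Fin (31 * n) → C 2) × C (2 ^ n - 1))) := by
  have hcard : Nat.card (C 2 × C 2 × C 2 × C 2 × C 2) - 1 = 31 := by
    rw [Nat.card_eq_fintype_card]; rfl
  exact hcard ▸ unit_group_stmt_12_general (by decide) (Nat.card_eq_fintype_card.trans hF)
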